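/- Let 1 ≤ l ≤ N−2 and let p, q be parameters (with entries a_{k,i}, b_{k,i} and a′_{k,i}, b′_{k,i} respectively) such that a_{k,i} = a′_{k,i} for all i and all k ≤ l, and b_{k,i} = b′_{k,i} for all i and all k ≤ l. Then the homogeneous component of total degree M+N+l of N_p − N_q equals x²·y^{M+l}·Σ_{i=l+1}^{N−1} (a_{l+1,i} − a′_{l+1,i})·∏_{j=1, j≠i}^{N−1}(y + a_{1,j}·x). -/

import Mathlib

open MvPolynomial

/-- The normal form `N_p` as a polynomial in `ℂ[x,y]`. -/
noncomputable def Npoly (M N : ℕ) (a b : ℕ → ℕ → ℂ) : MvPolynomial (Fin 2) ℂ :=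
  X 0 * X 1 * (X 1 + X 0 ^ 2) *
    (∏ i ∈ Finset.Icc 1 (N - 1),
      (X 1 + ∑ k ∈ Finset.Icc 1 i, C (a k i) * X 0 * X 1 ^ (k - 1))) *
    (∏ i ∈ Finset.Icc 1 (M - 2),
      (X 1 + ∑ k ∈ Finset.Icc 1 (N - 1 + 2 * i), C (b k i) * X 0 ^ (k + 1)))

/-!
Write `f = g + O(n + 1)` when `g` is homogeneous of degree `n` and `f - g` has only terms of degree
`> n`. Such initial forms multiply, and they obey a Leibniz rule: if `f i` and `f' i` have the same
initial form `g i`, and `f i - f' i` has initial form `d i` of degree `e` more than that of `g i`,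
then `∏ f i - ∏ f' i` has initial form `∑ i, d i * ∏ j ≠ i, g j`.

Changing the `a` coefficients from level `l + 1` on changes the factors `y + ∑ a x y ^ (k - 1)` by
`(a - a') x y ^ l + O(l + 2)`, whereas changing the `b` coefficients changes the factors
`y + ∑ b x ^ (k + 1)` only by `O(l + 2)`. So in degree `M + N + l` only the former contribute, and
they are multiplied by the initial forms `x y ^ 2` and `y ^ (M - 2)` of the remaining factors.
-/

/-- `g` is the homogeneous part of degree `n` of `f`, and `f` has no terms of degree less than `n`.
The form `g` is allowed to vanish, in which case all terms of `f` have degree greater than `n`. -/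
def HasInitialForm {σ R : Type*} [CommRing R] (f : MvPolynomial σ R) (n : ℕ)
    (g : MvPolynomial σ R) : Prop :=
  g.IsHomogeneous n ∧ f - g ∈ idealOfVars σ R ^ (n + 1)

section InitialForm

variable {σ ι R : Type*} [CommRing R]

lemma mem_pow_idealOfVars_of_isHomogeneous {f : MvPolynomial σ R} {m n : ℕ}
    (hf : f.IsHomogeneous m) (hnm : n ≤ m) : f ∈ idealOfVars σ R ^ n :=
  (mem_pow_idealOfVars_iff' n f).2 fun _ hx => hf.coeff_eq_zero (hx.trans_le hnm).ne

lemma homogeneousComponent_eq_zero_of_mem_pow_idealOfVars {f : MvPolynomial σ R} {m n : ℕ}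
    (hf : f ∈ idealOfVars σ R ^ m) (hnm : n < m) : homogeneousComponent n f = 0 := by
  refine homogeneousComponent_eq_zero' n f fun x hx => ?_
  exact (hnm.trans_le ((mem_pow_idealOfVars_iff m f).1 hf x hx)).ne'

namespace HasInitialForm

variable {f f' g g' : MvPolynomial σ R} {m n : ℕ}

lemma homogeneousComponent_eq (h : HasInitialForm f n g) : homogeneousComponent n f = g := by
  have hsub := homogeneousComponent_eq_zero_of_mem_pow_idealOfVars h.2 n.lt_succ_self
  rwa [map_sub, homogeneousComponent_eq_self h.1, sub_eq_zero] at hsub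

lemma mem_pow_idealOfVars (h : HasInitialForm f n g) : f ∈ idealOfVars σ R ^ n := by
  rw [← sub_add_cancel f g]
  exact add_mem (Ideal.pow_le_pow_right n.le_succ h.2)
    (mem_pow_idealOfVars_of_isHomogeneous h.1 le_rfl)

lemma of_isHomogeneous (hf : f.IsHomogeneous n) : HasInitialForm f n f :=
  ⟨hf, by simp⟩

lemma zero (n : ℕ) : HasInitialForm (0 : MvPolynomial σ R) n 0 :=
  of_isHomogeneous (isHomogeneous_zero σ R n)

lemma zero_of_isHomogeneous (hf : f.IsHomogeneous m) (hnm : n < m) : HasInitialForm f n 0 :=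
  ⟨isHomogeneous_zero σ R n, by simpa using mem_pow_idealOfVars_of_isHomogeneous hf hnm⟩

lemma add (h : HasInitialForm f n g) (h' : HasInitialForm f' n g') :
    HasInitialForm (f + f') n (g + g') :=
  ⟨h.1.add h'.1, by simpa only [add_sub_add_comm] using add_mem h.2 h'.2⟩

lemma sum {s : Finset ι} {f g : ι → MvPolynomial σ R}
    (h : ∀ i ∈ s, HasInitialForm (f i) n (g i)) :
    HasInitialForm (∑ i ∈ s, f i) n (∑ i ∈ s, g i) :=
  ⟨IsHomogeneous.sum s g n fun i hi => (h i hi).1, by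
    simpa only [Finset.sum_sub_distrib] using sum_mem fun i hi => (h i hi).2⟩

lemma mul (h : HasInitialForm f m g) (h' : HasInitialForm f' n g') :
    HasInitialForm (f * f') (m + n) (g * g') := by
  refine ⟨h.1.mul h'.1, ?_⟩
  have hleft : f * (f' - g') ∈ idealOfVars σ R ^ (m + n + 1) := by
    rw [add_assoc, pow_add]
    exact Ideal.mul_mem_mul h.mem_pow_idealOfVars h'.2
  have hright : (f - g) * g' ∈ idealOfVars σ R ^ (m + n + 1) := by
    rw [add_right_comm, pow_add]
    exact Ideal.mul_mem_mul h.2 (mem_pow_idealOfVars_of_isHomogeneous h'.1 le_rfl)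
  rw [show f * f' - g * g' = f * (f' - g') + (f - g) * g' by ring]
  exact add_mem hleft hright

lemma prod {s : Finset ι} {m : ι → ℕ} {f g : ι → MvPolynomial σ R}
    (h : ∀ i ∈ s, HasInitialForm (f i) (m i) (g i)) :
    HasInitialForm (∏ i ∈ s, f i) (∑ i ∈ s, m i) (∏ i ∈ s, g i) := by
  induction s using Finset.cons_induction with
  | empty => simpa using of_isHomogeneous (isHomogeneous_one σ R)
  | cons i s hi ih =>
    simp only [Finset.prod_cons, Finset.sum_cons, Finset.forall_mem_cons] at h ⊢
    exact h.1.mul (ih h.2)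

lemma prod_sub_prod [DecidableEq ι] {s : Finset ι} {m : ι → ℕ} {e : ℕ}
    {f f' g d : ι → MvPolynomial σ R}
    (hf : ∀ i ∈ s, HasInitialForm (f i) (m i) (g i))
    (hf' : ∀ i ∈ s, HasInitialForm (f' i) (m i) (g i))
    (hd : ∀ i ∈ s, HasInitialForm (f i - f' i) (e + m i) (d i)) :
    HasInitialForm (∏ i ∈ s, f i - ∏ i ∈ s, f' i) (e + ∑ i ∈ s, m i)
      (∑ i ∈ s, d i * ∏ j ∈ s.erase i, g j) := by
  induction s using Finset.induction_on with
  | empty => simpa using zero e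
  | insert i s hi ih =>
    simp only [Finset.forall_mem_insert] at hf hf' hd
    have hform : ∑ k ∈ insert i s, d k * ∏ j ∈ (insert i s).erase k, g j =
        d i * ∏ j ∈ s, g j + g i * ∑ k ∈ s, d k * ∏ j ∈ s.erase k, g j := by
      rw [Finset.sum_insert hi, Finset.erase_insert hi, Finset.mul_sum]
      refine congrArg _ (Finset.sum_congr rfl fun k hk => ?_)
      rw [Finset.erase_insert_of_ne (ne_of_mem_of_not_mem hk hi).symm,
        Finset.prod_insert fun h => hi (Finset.mem_of_mem_erase h), mul_left_comm]
    have htelescope : ∏ j ∈ insert i s, f j - ∏ j ∈ insert i s, f' j =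
        (f i - f' i) * ∏ j ∈ s, f j + f' i * (∏ j ∈ s, f j - ∏ j ∈ s, f' j) := by
      rw [Finset.prod_insert hi, Finset.prod_insert hi]
      ring
    have hfirst := hd.1.mul (prod hf.2)
    have hrest := hf'.1.mul (ih hf.2 hf'.2 hd.2)
    rw [add_left_comm, ← add_assoc] at hrest
    rw [hform, htelescope, Finset.sum_insert hi, ← add_assoc]
    exact hfirst.add hrest

end HasInitialForm

end InitialForm

section NormalForm

variable {ι R : Type*} [CommRing R]

/-- The factor `y + ∑ c_k x y ^ (k - 1)`, `1 ≤ k ≤ n`, of the normal form: a smooth curve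
transverse to `x = 0`, with tangent line `y + c_1 x = 0`. -/
noncomputable def transverseFactor (c : ℕ → R) (n : ℕ) : MvPolynomial (Fin 2) R :=
  X 1 + ∑ k ∈ Finset.Icc 1 n, C (c k) * X 0 * X 1 ^ (k - 1)

/-- The factor `y + ∑ c_k x ^ (k + 1)`, `1 ≤ k ≤ n`, of the normal form: a smooth curve tangent
to `y = 0`. -/
noncomputable def tangentFactor (c : ℕ → R) (n : ℕ) : MvPolynomial (Fin 2) R :=
  X 1 + ∑ k ∈ Finset.Icc 1 n, C (c k) * X 0 ^ (k + 1)

/-- The normal form with coefficients `a`, `b` in an arbitrary commutative ring; over `ℂ` this is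
definitionally `Npoly`. As there, the coefficient `a_{k,i}` is `a k i`. -/
noncomputable def normalForm (M N : ℕ) (a b : ℕ → ℕ → R) : MvPolynomial (Fin 2) R :=
  X 0 * X 1 * (X 1 + X 0 ^ 2) *
    (∏ i ∈ Finset.Icc 1 (N - 1), transverseFactor (a · i) i) *
    (∏ i ∈ Finset.Icc 1 (M - 2), tangentFactor (b · i) (N - 1 + 2 * i))

lemma isHomogeneous_C_mul_X_mul_X_pow (c : R) (k : ℕ) :
    (C c * X 0 * X 1 ^ k : MvPolynomial (Fin 2) R).IsHomogeneous (k + 1) := by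
  rw [add_comm]
  exact (isHomogeneous_C_mul_X c 0).mul (isHomogeneous_X_pow 1 k)

lemma hasInitialForm_transverseFactor_sub {c c' : ℕ → R} {l n : ℕ}
    (h : ∀ k ∈ Finset.Icc 1 n, k ≤ l → c k = c' k) :
    HasInitialForm (transverseFactor c n - transverseFactor c' n) (l + 1)
      (if l + 1 ≤ n then C (c (l + 1) - c' (l + 1)) * X 0 * X 1 ^ l else 0) := by
  have hform : (if l + 1 ≤ n then C (c (l + 1) - c' (l + 1)) * X 0 * X 1 ^ l else 0 :
      MvPolynomial (Fin 2) R) = ∑ k ∈ Finset.Icc 1 n,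
        if k = l + 1 then C (c k - c' k) * X 0 * X 1 ^ (k - 1) else 0 := by
    simp [Finset.sum_ite_eq']
  rw [hform, transverseFactor, transverseFactor, add_sub_add_left_eq_sub, ← Finset.sum_sub_distrib]
  refine HasInitialForm.sum fun k hk => ?_
  rw [← sub_mul, ← sub_mul, ← map_sub]
  have hterm := isHomogeneous_C_mul_X_mul_X_pow (c k - c' k) (k - 1)
  rw [Nat.sub_add_cancel (Finset.mem_Icc.1 hk).1] at hterm
  rcases lt_trichotomy k (l + 1) with hlt | rfl | hgt
  · simpa [h k hk (Nat.lt_succ_iff.1 hlt), hlt.ne] using HasInitialForm.zero (l + 1)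
  · simpa only [if_true] using HasInitialForm.of_isHomogeneous hterm
  · simpa only [if_neg hgt.ne'] using HasInitialForm.zero_of_isHomogeneous hterm hgt

lemma hasInitialForm_tangentFactor_sub {c c' : ℕ → R} {l n : ℕ}
    (h : ∀ k ∈ Finset.Icc 1 n, k ≤ l → c k = c' k) :
    HasInitialForm (tangentFactor c n - tangentFactor c' n) (l + 1) 0 := by
  rw [tangentFactor, tangentFactor, add_sub_add_left_eq_sub, ← Finset.sum_sub_distrib]
  suffices hterm : ∀ k ∈ Finset.Icc 1 n, HasInitialForm
      (C (c k) * X 0 ^ (k + 1) - C (c' k) * X 0 ^ (k + 1) : MvPolynomial (Fin 2) R) (l + 1) 0 by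
    simpa only [Finset.sum_const_zero] using HasInitialForm.sum hterm
  intro k hk
  rw [← sub_mul, ← map_sub]
  rcases le_or_gt k l with hle | hgt
  · simpa [h k hk hle] using HasInitialForm.zero (l + 1)
  · exact HasInitialForm.zero_of_isHomogeneous (isHomogeneous_C_mul_X_pow (c k - c' k) 0 (k + 1))
      (Nat.succ_lt_succ hgt)

lemma hasInitialForm_transverseFactor (c : ℕ → R) {n : ℕ} (hn : 1 ≤ n) :
    HasInitialForm (transverseFactor c n) 1 (X 1 + C (c 1) * X 0) := by
  have htail : HasInitialForm (transverseFactor c n - X 1) 1 (C (c 1) * X 0) := by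
    simpa [transverseFactor, hn] using
      hasInitialForm_transverseFactor_sub (c := c) (c' := 0) (l := 0) (n := n)
        fun k hk hk0 => absurd (Finset.mem_Icc.1 hk).1 hk0.not_gt
  simpa using (HasInitialForm.of_isHomogeneous (isHomogeneous_X R 1)).add htail

lemma hasInitialForm_tangentFactor (c : ℕ → R) (n : ℕ) :
    HasInitialForm (tangentFactor c n) 1 (X 1) := by
  have htail : HasInitialForm (tangentFactor c n - X 1) 1 0 := by
    simpa [tangentFactor] using
      hasInitialForm_tangentFactor_sub (c := c) (c' := 0) (l := 0) (n := n)
        fun k hk hk0 => absurd (Finset.mem_Icc.1 hk).1 hk0.not_gt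
  simpa using (HasInitialForm.of_isHomogeneous (isHomogeneous_X R 1)).add htail

lemma hasInitialForm_X_mul_X_mul_X_add_X_sq :
    HasInitialForm (X 0 * X 1 * (X 1 + X 0 ^ 2) : MvPolynomial (Fin 2) R) 3
      (X 0 * X 1 * X 1) := by
  have hparabola : HasInitialForm (X 1 + X 0 ^ 2 : MvPolynomial (Fin 2) R) 1 (X 1) := by
    simpa using (HasInitialForm.of_isHomogeneous (isHomogeneous_X R 1)).add
      (.zero_of_isHomogeneous (isHomogeneous_X_pow 0 2) one_lt_two)
  exact (HasInitialForm.of_isHomogeneous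
    ((isHomogeneous_X R 0).mul (isHomogeneous_X R 1))).mul hparabola

lemma hasInitialForm_prod_transverseFactor {s : Finset ι} {r : ι → ℕ} (hr : ∀ i ∈ s, 1 ≤ r i)
    (a : ℕ → ι → R) :
    HasInitialForm (∏ i ∈ s, transverseFactor (a · i) (r i)) s.card
      (∏ i ∈ s, (X 1 + C (a 1 i) * X 0)) := by
  simpa using HasInitialForm.prod fun i hi => hasInitialForm_transverseFactor (a · i) (hr i hi)

lemma hasInitialForm_prod_transverseFactor_sub [DecidableEq ι] {s : Finset ι} {r : ι → ℕ}
    (hr : ∀ i ∈ s, 1 ≤ r i) {l : ℕ} (hl : 1 ≤ l) {a a' : ℕ → ι → R}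
    (h : ∀ i ∈ s, ∀ k ∈ Finset.Icc 1 (r i), k ≤ l → a k i = a' k i) :
    HasInitialForm
      (∏ i ∈ s, transverseFactor (a · i) (r i) - ∏ i ∈ s, transverseFactor (a' · i) (r i))
      (l + s.card)
      (X 0 * X 1 ^ l * ∑ i ∈ s with l + 1 ≤ r i, C (a (l + 1) i - a' (l + 1) i) *
        ∏ j ∈ s.erase i, (X 1 + C (a 1 j) * X 0)) := by
  have hdiff := HasInitialForm.prod_sub_prod
    (fun i hi => hasInitialForm_transverseFactor (a · i) (hr i hi))
    (fun i hi => by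
      rw [h i hi 1 (Finset.left_mem_Icc.2 (hr i hi)) hl]
      exact hasInitialForm_transverseFactor (a' · i) (hr i hi))
    (fun i hi => hasInitialForm_transverseFactor_sub (h i hi))
  rw [Finset.sum_filter, Finset.mul_sum]
  convert hdiff using 1
  · simp
  · refine Finset.sum_congr rfl fun i _ => ?_
    split_ifs <;> ring

lemma hasInitialForm_prod_tangentFactor (s : Finset ι) (r : ι → ℕ) (b : ℕ → ι → R) :
    HasInitialForm (∏ i ∈ s, tangentFactor (b · i) (r i)) s.card (X 1 ^ s.card) := by
  simpa using HasInitialForm.prod (s := s) fun i _ => hasInitialForm_tangentFactor (b · i) (r i)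

lemma hasInitialForm_prod_tangentFactor_sub {s : Finset ι} {r : ι → ℕ} {l : ℕ}
    {b b' : ℕ → ι → R}
    (h : ∀ i ∈ s, ∀ k ∈ Finset.Icc 1 (r i), k ≤ l → b k i = b' k i) :
    HasInitialForm (∏ i ∈ s, tangentFactor (b · i) (r i) - ∏ i ∈ s, tangentFactor (b' · i) (r i))
      (l + s.card) 0 := by
  classical
  simpa using HasInitialForm.prod_sub_prod
    (fun i _ => hasInitialForm_tangentFactor (b · i) (r i))
    (fun i _ => hasInitialForm_tangentFactor (b' · i) (r i))
    (fun i hi => hasInitialForm_tangentFactor_sub (h i hi))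

theorem stmt_12_general {M N l : ℕ} (hM : 2 ≤ M) (hN : 1 ≤ N) (hl : 1 ≤ l)
    {a b a' b' : ℕ → ℕ → R}
    (ha : ∀ i ∈ Finset.Icc 1 (N - 1), ∀ k ∈ Finset.Icc 1 i, k ≤ l → a k i = a' k i)
    (hb : ∀ i ∈ Finset.Icc 1 (M - 2), ∀ k ∈ Finset.Icc 1 (N - 1 + 2 * i), k ≤ l →
      b k i = b' k i) :
    HasInitialForm (normalForm M N a b - normalForm M N a' b') (M + N + l)
      (X 0 ^ 2 * X 1 ^ (M + l) *
        ∑ i ∈ Finset.Icc (l + 1) (N - 1), C (a (l + 1) i - a' (l + 1) i) *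
          ∏ j ∈ (Finset.Icc 1 (N - 1)).erase i, (X 1 + C (a 1 j) * X 0)) := by
  have hpos : ∀ i ∈ Finset.Icc 1 (N - 1), 1 ≤ i := fun i hi => (Finset.mem_Icc.1 hi).1
  have htransverse := (hasInitialForm_prod_transverseFactor_sub hpos hl ha).mul
    (hasInitialForm_prod_tangentFactor (Finset.Icc 1 (M - 2)) (N - 1 + 2 * ·) b)
  have htangent := (hasInitialForm_prod_transverseFactor hpos a').mul
    (hasInitialForm_prod_tangentFactor_sub hb)
  rw [add_left_comm, ← add_assoc] at htangent
  have hsub := hasInitialForm_X_mul_X_mul_X_add_X_sq.mul (htransverse.add htangent)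
  have hIcc : Finset.Icc (l + 1) (N - 1) = {i ∈ Finset.Icc 1 (N - 1) | l + 1 ≤ i} := by
    ext i
    simp only [Finset.mem_Icc, Finset.mem_filter]
    omega
  obtain ⟨m, rfl⟩ := Nat.exists_eq_add_of_le' hM
  rw [hIcc]
  simp only [Nat.card_Icc, Nat.add_sub_cancel] at hsub
  convert hsub using 1
  · simp only [normalForm, Nat.add_sub_cancel]
    ring
  · omega
  · ring

end NormalForm

/-- If the parameters `p` and `q` agree at all levels `k ≤ l`, then the homogeneous
component of total degree `M+N+l` of `N_p - N_q` is
`x²·y^{M+l}·Σ_{i=l+1}^{N-1} (a_{l+1,i} - a'_{l+1,i})·∏_{j≠i} (y + a_{1,j} x)`. -/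
theorem stmt_12 (M N : ℕ) (hM : 2 ≤ M) (hN : 2 ≤ N) (l : ℕ) (hl1 : 1 ≤ l) (hl2 : l ≤ N - 2)
    (a b a' b' : ℕ → ℕ → ℂ)
    (ha : ∀ i ∈ Finset.Icc 1 (N - 1), ∀ k ∈ Finset.Icc 1 i, k ≤ l → a k i = a' k i)
    (hb : ∀ i ∈ Finset.Icc 1 (M - 2), ∀ k ∈ Finset.Icc 1 (N - 1 + 2 * i), k ≤ l →
      b k i = b' k i) :
    homogeneousComponent (M + N + l) (Npoly M N a b - Npoly M N a' b') =
      X 0 ^ 2 * X 1 ^ (M + l) *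
        ∑ i ∈ Finset.Icc (l + 1) (N - 1), C (a (l + 1) i - a' (l + 1) i) *
          ∏ j ∈ (Finset.Icc 1 (N - 1)).erase i, (X 1 + C (a 1 j) * X 0) := by
  exact (stmt_12_general hM (one_le_two.trans hN) hl1 ha hb).homogeneousComponent_eq
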